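/- Let G be a finitely presented group with a finite presentation ⟨X | R⟩ whose Dehn function satisfies δ_G(m) > 0 for all m ∈ ℕ. Then the isoperimetric spectrum of G with respect to X satisfies δ_G(n)/δ_G(m) ≼ f_{G,X}(k,m,n) ≼ δ_G(n)/m, where the left- and right-hand sides are regarded as elements of 𝓕 that do not depend on the first argument k. In particular, f_{G,X}(k,m,n) is equivalent to a function that depends on m and n only. -/

import Mathlib

open Function

namespace IsoSpecPaper

variable {ι : Type*} {G : Type*} [Group G]

/-- The (reduced) length of an element of a free group. -/
noncomputable def wnorm (w : FreeGroup ι) : ℕ :=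
  @FreeGroup.norm ι (Classical.decEq ι) w

/-- `triv φ k` : the set of words of length at most `k` in the generators
(and their inverses) representing the identity of `G` under the marking `φ`. -/
noncomputable def triv (φ : FreeGroup ι →* G) (k : ℕ) : Set (FreeGroup ι) :=
  {w | wnorm w ≤ k ∧ φ w = 1}

/-- `AreaLe R w l` : `w` is a product of `l` conjugates of elements of `R` or
their inverses in the free group. -/
def AreaLe (R : Set (FreeGroup ι)) (w : FreeGroup ι) (l : ℕ) : Prop :=
  ∃ L : List (FreeGroup ι × FreeGroup ι), L.length = l ∧
    (∀ p ∈ L, p.2 ∈ R ∨ p.2⁻¹ ∈ R) ∧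
    w = (L.map fun p => p.1⁻¹ * p.2 * p.1).prod

/-- The area of `w` with respect to the set of relators `R`. -/
noncomputable def area (R : Set (FreeGroup ι)) (w : FreeGroup ι) : ℕ :=
  sInf {l | AreaLe R w l}

/-- The isoperimetric spectrum of the marked group `(G, φ)`:
`isoSpec φ k m n = max { area_{S_m}(w) : w ∈ ⟪S_k⟫, ‖w‖ ≤ n }`. -/
noncomputable def isoSpec (φ : FreeGroup ι →* G) (k m n : ℕ) : ℕ :=
  sSup (area (triv φ m) '' {w | w ∈ Subgroup.normalClosure (triv φ k) ∧ wnorm w ≤ n})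

/-- The real-valued isoperimetric spectrum. -/
noncomputable def isoSpecR (φ : FreeGroup ι →* G) : ℕ → ℕ → ℕ → ℝ :=
  fun k m n => (isoSpec φ k m n : ℝ)

/-- The Dehn function of the presentation with relators `R`. -/
noncomputable def dehn (R : Set (FreeGroup ι)) (n : ℕ) : ℕ :=
  sSup (area R '' {w | w ∈ Subgroup.normalClosure R ∧ wnorm w ≤ n})

/-- The quasi-order `f ≼ g` on functions of triples `(k,m,n)` of positive integers
with `m ≥ k`. -/
def SpecLE (f g : ℕ → ℕ → ℕ → ℝ) : Prop :=
  ∃ C : ℕ, 0 < C ∧ ∀ k m n : ℕ, 0 < k → 0 < m → 0 < n → C * k ≤ m →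
    f k (C * m) n ≤ C * g (C * k) m (C * n) + C * (n : ℝ) / m + C

/-- Equivalence of isoperimetric functions: `f ∼ g`. -/
def SpecEquiv (f g : ℕ → ℕ → ℕ → ℝ) : Prop := SpecLE f g ∧ SpecLE g f

/-- The linear spectrum `(k,m,n) ↦ n/m`. -/
noncomputable def linSpec : ℕ → ℕ → ℕ → ℝ := fun _ m n => (n : ℝ) / m

/-- The word length of `g ∈ G` with respect to the marking `φ`. -/
noncomputable def wlen (φ : FreeGroup ι →* G) (g : G) : ℕ :=
  sInf {n | ∃ w : FreeGroup ι, wnorm w = n ∧ φ w = g}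

/-- The word metric on `G` with respect to the marking `φ`. -/
noncomputable def wdist (φ : FreeGroup ι →* G) (g h : G) : ℕ := wlen φ (g⁻¹ * h)

/-- Quasi-isometry of marked groups with respect to their word metrics. -/
noncomputable def QuasiIsometric {H : Type*} [Group H] {κ : Type*}
    (φ : FreeGroup ι →* G) (ψ : FreeGroup κ →* H) : Prop :=
  ∃ L : ℝ, 0 ≤ L ∧ ∃ (α : G → H) (β : H → G),
    (∀ x y : G, (wdist ψ (α x) (α y) : ℝ) ≤ L * wdist φ x y + L) ∧
    (∀ u v : H, (wdist φ (β u) (β v) : ℝ) ≤ L * wdist ψ u v + L) ∧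
    (∀ t : H, (wdist ψ (α (β t)) t : ℝ) ≤ L) ∧
    (∀ s : G, (wdist φ (β (α s)) s : ℝ) ≤ L)

/-- A (combinatorial) geodesic path of length `n` in the Cayley graph of `(G, φ)`:
consecutive vertices are at distance at most `1` and the endpoints are at
distance exactly `n`. -/
noncomputable def IsGeodesic (φ : FreeGroup ι →* G) {n : ℕ} (p : Fin (n + 1) → G) : Prop :=
  (∀ i : Fin n, wdist φ (p i.castSucc) (p i.succ) ≤ 1) ∧
  wdist φ (p 0) (p (Fin.last n)) = n

/-- Every vertex of the path `p` lies within distance `δ` of the set `A`. -/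
noncomputable def ThinAt (φ : FreeGroup ι →* G) (δ : ℝ) {n : ℕ}
    (p : Fin (n + 1) → G) (A : Set G) : Prop :=
  ∀ i, ∃ a ∈ A, (wdist φ (p i) a : ℝ) ≤ δ

/-- The Cayley graph of `(G, φ)` is `δ`-hyperbolic: every geodesic triangle is `δ`-thin. -/
noncomputable def HypConst (φ : FreeGroup ι →* G) (δ : ℝ) : Prop :=
  ∀ (n₁ n₂ n₃ : ℕ) (p : Fin (n₁ + 1) → G) (q : Fin (n₂ + 1) → G) (r : Fin (n₃ + 1) → G),
    IsGeodesic φ p → IsGeodesic φ q → IsGeodesic φ r →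
    p (Fin.last n₁) = q 0 → q (Fin.last n₂) = r 0 → r (Fin.last n₃) = p 0 →
    ThinAt φ δ p (Set.range q ∪ Set.range r) ∧
    ThinAt φ δ q (Set.range r ∪ Set.range p) ∧
    ThinAt φ δ r (Set.range p ∪ Set.range q)

/-- The marked group `(G, φ)` is hyperbolic. -/
noncomputable def IsHyperbolic (φ : FreeGroup ι →* G) : Prop :=
  ∃ δ : ℝ, 0 ≤ δ ∧ HypConst φ δ

/-- `G` (marked by `φ`) is a limit (direct limit) of hyperbolic groups. -/
noncomputable def LimitOfHyperbolic (φ : FreeGroup ι →* G) : Prop :=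
  Surjective φ ∧ ∃ R : ℕ → Set (FreeGroup ι),
    (∀ i j, i ≤ j → R i ⊆ R j) ∧
    φ.ker = Subgroup.normalClosure (⋃ i, R i) ∧
    ∀ i, IsHyperbolic (QuotientGroup.mk' (Subgroup.normalClosure (R i)))

/-- `G` (marked by `φ`) is well-approximated by hyperbolic groups. -/
noncomputable def WellApproximated (φ : FreeGroup ι →* G) : Prop :=
  Surjective φ ∧ ∃ R : ℕ → Set (FreeGroup ι),
    (∀ i j, i ≤ j → R i ⊆ R j) ∧
    φ.ker = Subgroup.normalClosure (⋃ i, R i) ∧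
    (∀ i, IsHyperbolic (QuotientGroup.mk' (Subgroup.normalClosure (R i)))) ∧
    ∃ C : ℕ, 0 < C ∧ ∀ i : ℕ, 0 < i →
      (∀ w : FreeGroup ι, wnorm w ≤ i → φ w = 1 →
        w ∈ Subgroup.normalClosure (R i)) ∧
      HypConst (QuotientGroup.mk' (Subgroup.normalClosure (R i))) ((C * i : ℕ) : ℝ)

/-!
Closing up a van Kampen diagram of area `A` over relators of length at most `M`, one can walk along
its 1-skeleton so that the boundary word `w` is spelled by at most `M * A + ‖w‖` moves, each of
which either crosses an edge or goes once around a face. Recording next to every move the edge it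
crosses (nothing, for a face) writes `(w, 1)` as a product of that many short elements of the fibre
product `F ×_G F`, since the edges that are crossed cancel in `F`. Cutting this product into blocks
of `m` moves writes `w` as a product of about `(M * A + ‖w‖) / m` conjugates of words of length
`O(m)` that are trivial in `G`, whence the upper bound. The lower bound comes from filling each
relator of length at most `m` by `δ(m)` relators of `R`.

Diagrams are handled combinatorially: a cyclic word is filled when each of its letters either lies
on a face, whose removal lowers the area, or is a bridge joining two filled words. Imposing this on
*every* letter, rather than on the first one only, makes the condition invariant under rotation, and
this is what makes it stable under free reduction.
-/

section WordNorm

theorem wnorm_eq_norm [DecidableEq ι] (w : FreeGroup ι) : wnorm w = w.norm := by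
  rw [wnorm]
  congr!

theorem wnorm_one : wnorm (1 : FreeGroup ι) = 0 := by
  classical rw [wnorm_eq_norm, FreeGroup.norm_one]

theorem wnorm_inv (w : FreeGroup ι) : wnorm w⁻¹ = wnorm w := by
  classical rw [wnorm_eq_norm, wnorm_eq_norm, FreeGroup.norm_inv_eq]

theorem wnorm_mul_le (u v : FreeGroup ι) : wnorm (u * v) ≤ wnorm u + wnorm v := by
  classical simpa only [wnorm_eq_norm] using FreeGroup.norm_mul_le u v

theorem wnorm_mk_le (l : List (ι × Bool)) : wnorm (FreeGroup.mk l) ≤ l.length := by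
  classical simpa only [wnorm_eq_norm] using FreeGroup.norm_mk_le

theorem finite_setOf_wnorm_le [Finite ι] (n : ℕ) : {w : FreeGroup ι | wnorm w ≤ n}.Finite := by
  classical
  refine ((List.finite_length_le (ι × Bool) n).preimage
    FreeGroup.toWord_injective.injOn).subset fun w hw => ?_
  have hlen : w.norm ≤ n := wnorm_eq_norm w ▸ hw
  exact hlen

end WordNorm

section Area

variable {R S : Set (FreeGroup ι)} {u v w : FreeGroup ι} {a b l : ℕ}

theorem AreaLe.one : AreaLe R 1 0 := ⟨[], by simp⟩

theorem AreaLe.of_mem (h : u ∈ R) : AreaLe R u 1 := ⟨[(1, u)], by simp [h]⟩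

theorem AreaLe.mul (hu : AreaLe R u a) (hv : AreaLe R v b) : AreaLe R (u * v) (a + b) := by
  obtain ⟨L, rfl, hL, rfl⟩ := hu
  obtain ⟨L', rfl, hL', rfl⟩ := hv
  exact ⟨L ++ L', by simp, fun p hp => (List.mem_append.1 hp).elim (hL p) (hL' p), by simp⟩

@[elab_as_elim]
theorem AreaLe.induction {P : FreeGroup ι → ℕ → Prop} (one : P 1 0)
    (conj_mul : ∀ f r w l, r ∈ R ∨ r⁻¹ ∈ R → P w l → P (f⁻¹ * r * f * w) (l + 1))
    (h : AreaLe R w l) : P w l := by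
  obtain ⟨L, rfl, hL, rfl⟩ := h
  induction L with
  | nil => exact one
  | cons p L ih =>
    rw [List.forall_mem_cons] at hL
    exact conj_mul p.1 p.2 _ _ hL.1 (ih hL.2)

theorem AreaLe.conj (h : AreaLe R u a) (f : FreeGroup ι) : AreaLe R (f⁻¹ * u * f) a := by
  refine AreaLe.induction (by simpa using AreaLe.one) (fun g r w l hr ih => ?_) h
  have hr_conj : AreaLe R ((g * f)⁻¹ * r * (g * f)) 1 :=
    ⟨[(g * f, r)], rfl, by simpa using hr, by simp⟩
  convert hr_conj.mul ih using 1
  · group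
  · exact add_comm _ _

theorem AreaLe.inv (h : AreaLe R u a) : AreaLe R u⁻¹ a := by
  refine AreaLe.induction (by simpa using AreaLe.one) (fun f r w l hr ih => ?_) h
  have hr_conj : AreaLe R (f⁻¹ * r⁻¹ * f) 1 := ⟨[(f, r⁻¹)], rfl, by simpa using hr.symm, by simp⟩
  convert ih.mul hr_conj using 1
  group

theorem AreaLe.mono (hRS : R ⊆ S) (h : AreaLe R w l) : AreaLe S w l := by
  obtain ⟨L, hl, hL, hw⟩ := h
  exact ⟨L, hl, fun p hp => (hL p hp).imp (@hRS _) (@hRS _), hw⟩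

theorem AreaLe.area_le (h : AreaLe R w l) : area R w ≤ l := Nat.sInf_le h

theorem exists_areaLe (h : w ∈ Subgroup.normalClosure R) : ∃ l, AreaLe R w l := by
  induction h using Subgroup.closure_induction with
  | mem x hx =>
    obtain ⟨r, hr, hc⟩ := Group.mem_conjugatesOfSet_iff.1 hx
    obtain ⟨f, rfl⟩ := isConj_iff.1 hc
    exact ⟨1, by simpa using (AreaLe.of_mem hr).conj f⁻¹⟩
  | one => exact ⟨0, .one⟩
  | mul u v _ _ hu hv =>
    obtain ⟨⟨a, ha⟩, b, hb⟩ := hu, hv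
    exact ⟨a + b, ha.mul hb⟩
  | inv u _ hu => exact hu.imp fun _ => AreaLe.inv

theorem areaLe_area (h : w ∈ Subgroup.normalClosure R) : AreaLe R w (area R w) :=
  Nat.sInf_mem (exists_areaLe h)

theorem area_anti (hRS : R ⊆ S) (h : w ∈ Subgroup.normalClosure R) : area S w ≤ area R w :=
  ((areaLe_area h).mono hRS).area_le

theorem AreaLe.exists_areaLe_le_mul {d : ℕ} (hS : ∀ s ∈ S, ∃ e ≤ d, AreaLe R s e)
    (h : AreaLe S w l) : ∃ e ≤ l * d, AreaLe R w e := by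
  refine AreaLe.induction (P := fun w l => ∃ e ≤ l * d, AreaLe R w e) ⟨0, by simp, .one⟩ ?_ h
  rintro f s w l hs ⟨e, hel, he⟩
  obtain ⟨e', hed, he'⟩ : ∃ e' ≤ d, AreaLe R s e' := hs.elim (hS s) fun hs =>
    (hS _ hs).imp fun _ he => ⟨he.1, by simpa using he.2.inv⟩
  exact ⟨e' + e, by linarith, (he'.conj f).mul he⟩

end Area

section MaxArea

variable {R S : Set (FreeGroup ι)} {N : Subgroup (FreeGroup ι)} {w : FreeGroup ι} {n : ℕ}

/-- The largest area over `S` of an element of `N` of length at most `n`. The Dehn function and the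
isoperimetric spectrum are the cases `N = ⟪R⟫, S = R` and `N = ⟪S_k⟫, S = S_m`. -/
noncomputable def maxArea (N : Subgroup (FreeGroup ι)) (S : Set (FreeGroup ι)) (n : ℕ) : ℕ :=
  sSup (area S '' {w | w ∈ N ∧ wnorm w ≤ n})

theorem area_le_maxArea [Finite ι] (hw : w ∈ N) (hn : wnorm w ≤ n) : area S w ≤ maxArea N S n :=
  le_csSup (((finite_setOf_wnorm_le n).subset fun _ h => h.2).image _).bddAbove ⟨w, ⟨hw, hn⟩, rfl⟩

theorem maxArea_le {B : ℕ} (h : ∀ w ∈ N, wnorm w ≤ n → area S w ≤ B) : maxArea N S n ≤ B := by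
  refine csSup_le ⟨_, 1, ⟨one_mem _, by simp [wnorm_one]⟩, rfl⟩ ?_
  rintro _ ⟨w, hw, rfl⟩
  exact h w hw.1 hw.2

theorem maxArea_mono [Finite ι] {N' : Subgroup (FreeGroup ι)} {n' : ℕ} (hN : N ≤ N')
    (hRS : R ⊆ S) (hNR : N ≤ Subgroup.normalClosure R) (hn : n ≤ n') :
    maxArea N S n ≤ maxArea N' R n' :=
  maxArea_le fun _ hw hwn =>
    (area_anti hRS (hNR hw)).trans (area_le_maxArea (hN hw) (hwn.trans hn))

theorem dehn_mono [Finite ι] : Monotone (dehn R) := fun _ _ hmn =>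
  maxArea_mono le_rfl subset_rfl le_rfl hmn

end MaxArea

section TrivialWords

variable {φ : FreeGroup ι →* G} {R : Set (FreeGroup ι)} {k m : ℕ}

theorem triv_mono (φ : FreeGroup ι →* G) : Monotone (triv φ) :=
  fun _ _ hkm _ hw => ⟨hw.1.trans hkm, hw.2⟩

theorem inv_mem_triv_iff {w : FreeGroup ι} : w⁻¹ ∈ triv φ k ↔ w ∈ triv φ k := by
  simp [triv, wnorm_inv]

theorem normalClosure_triv_le_ker (φ : FreeGroup ι →* G) (k : ℕ) :
    Subgroup.normalClosure (triv φ k) ≤ φ.ker :=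
  Subgroup.normalClosure_le_normal fun _ hw => hw.2

theorem normalClosure_triv_eq_ker (hker : φ.ker = Subgroup.normalClosure R) (hR : R ⊆ triv φ k) :
    Subgroup.normalClosure (triv φ k) = φ.ker :=
  (normalClosure_triv_le_ker φ k).antisymm (hker ▸ Subgroup.normalClosure_mono hR)

theorem exists_subset_triv (hR : R.Finite) (hφR : R ⊆ φ.ker) : ∃ k, R ⊆ triv φ k := by
  obtain ⟨k, hk⟩ := (hR.image wnorm).bddAbove
  exact ⟨k, fun r hr => ⟨hk ⟨r, hr, rfl⟩, hφR hr⟩⟩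

theorem dehn_le_isoSpec_mul_dehn [Finite ι] (hker : φ.ker = Subgroup.normalClosure R)
    (hR : R ⊆ triv φ k) (hkm : k ≤ m) (n : ℕ) : dehn R n ≤ isoSpec φ k m n * dehn R m := by
  have hk : Subgroup.normalClosure (triv φ k) = Subgroup.normalClosure R :=
    (normalClosure_triv_eq_ker hker hR).trans hker
  have hm : Subgroup.normalClosure (triv φ m) = Subgroup.normalClosure R :=
    (normalClosure_triv_eq_ker hker (hR.trans (triv_mono φ hkm))).trans hker
  refine maxArea_le fun w hw hwn => ?_
  have area_triv_le : ∀ s ∈ triv φ m, ∃ e ≤ dehn R m, AreaLe R s e := fun s hs =>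
    have hsR : s ∈ Subgroup.normalClosure R := hm ▸ Subgroup.subset_normalClosure hs
    ⟨_, area_le_maxArea hsR hs.1, areaLe_area hsR⟩
  obtain ⟨e, hle, he⟩ := (areaLe_area (hm ▸ hw)).exists_areaLe_le_mul area_triv_le
  exact he.area_le.trans (hle.trans (Nat.mul_le_mul_right _ (area_le_maxArea (hk ▸ hw) hwn)))

end TrivialWords

section Filling

open List

theorem exists_append_of_isRotated {α : Type*} {l l' : List α} (h : l ~r l') :
    ∃ p q, l = p ++ q ∧ l' = q ++ p := by
  obtain ⟨n, hn, rfl⟩ := isRotated_iff_mod.1 h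
  exact ⟨l.take n, l.drop n, (take_append_drop n l).symm, rotate_eq_drop_append_take hn⟩

theorem exists_append_cons_of_isRotated {α : Type*} {l t : List α} {y : α} (h : l ~r y :: t) :
    ∃ p q, l = p ++ y :: q ∧ t = q ++ p := by
  obtain ⟨p, q, rfl, hqp⟩ := exists_append_of_isRotated h
  rcases cons_eq_append_iff.1 hqp with ⟨rfl, rfl⟩ | ⟨q, rfl, ht⟩
  · exact ⟨[], t, by simp, by simp⟩
  · exact ⟨p, q, rfl, ht⟩

theorem append_eq_append_cons {α : Type*} {p q u v : List α} {z : α}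
    (h : q ++ p = u ++ z :: v) :
    (∃ r, u = q ++ r ∧ p = r ++ z :: v) ∨ ∃ r, q = u ++ z :: r ∧ v = r ++ p := by
  rcases append_eq_append_iff.1 h with hr | ⟨r, hq, hr⟩
  · exact .inl hr
  · rcases cons_eq_append_iff.1 hr with ⟨rfl, rfl⟩ | ⟨r, rfl, rfl⟩
    · exact .inl ⟨[], by simpa using hq.symm, rfl⟩
    · exact .inr ⟨r, hq, rfl⟩

variable {Rs : Set (List (ι × Bool))} {Q Q' : List (ι × Bool) → ℕ → Prop}
  {l l' u v p q t : List (ι × Bool)} {x y : ι × Bool} {a c A : ℕ}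

/-- The local condition, at its first letter `y`, for the cyclic word `y :: t` to bound a planar
diagram of area `A`: either `y` lies on a face with label `y :: s ∈ Rs`, whose removal leaves a
diagram of area `A - 1`, or `y` is a bridge, which the boundary crosses a second time in the
opposite direction and which joins two diagrams of total area `A`. Here `Q l a` expresses that
`l` bounds a diagram of area `a`. -/
inductive HeadFilling (Rs : Set (List (ι × Bool))) (Q : List (ι × Bool) → ℕ → Prop) :
    List (ι × Bool) → ℕ → Prop
  | face {y : ι × Bool} {s t : List (ι × Bool)} {a : ℕ} (hs : y :: s ∈ Rs)
      (ht : Q (FreeGroup.invRev s ++ t) a) : HeadFilling Rs Q (y :: t) (a + 1)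
  | bridge {y : ι × Bool} {u v : List (ι × Bool)} {a c : ℕ} (hu : Q u a) (hv : Q v c) :
      HeadFilling Rs Q (y :: (u ++ (y.1, !y.2) :: v)) (a + c)

/-- `Filling Rs l A`: the unreduced cyclic word `l` bounds a planar diagram with `A` faces labelled
by words in `Rs`. This is the combinatorial substitute for van Kampen diagrams. The empty word has
fillings of every area, so `A` is to be read as an upper bound. -/
inductive Filling (Rs : Set (List (ι × Bool))) : List (ι × Bool) → ℕ → Prop
  | intro {l : List (ι × Bool)} {A : ℕ}
      (h : ∀ y t, l ~r y :: t → HeadFilling Rs (Filling Rs) (y :: t) A) : Filling Rs l A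

theorem Filling.head (h : Filling Rs l A) (hl : l ~r y :: t) :
    HeadFilling Rs (Filling Rs) (y :: t) A := by
  cases h with
  | intro h => exact h y t hl

@[elab_as_elim]
theorem Filling.induction {P : List (ι × Bool) → ℕ → Prop}
    (step : ∀ l A, Filling Rs l A → (∀ y t, l ~r y :: t →
      HeadFilling Rs (fun l a => Filling Rs l a ∧ P l a) (y :: t) A) → P l A)
    (h : Filling Rs l A) : P l A :=
  Filling.rec (motive_1 := fun l A _ => P l A)
    (motive_2 := fun l A _ => HeadFilling Rs (fun l a => Filling Rs l a ∧ P l a) l A)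
    (fun h ih => step _ _ (.intro h) ih) (fun hs ht ih => .face hs ⟨ht, ih⟩)
    (fun hu hv ihu ihv => .bridge ⟨hu, ihu⟩ ⟨hv, ihv⟩) h

theorem Filling.of_isRotated (h : Filling Rs l A) (hl : l ~r l') : Filling Rs l' A :=
  .intro fun _ _ ht => h.head (hl.trans ht)

theorem filling_nil (A : ℕ) : Filling Rs [] A :=
  .intro fun _ _ ht => by simp at ht

theorem filling_pair (x : ι × Bool) : Filling Rs [x, (x.1, !x.2)] 0 := by
  refine .intro fun y t ht => ?_
  obtain ⟨p, q, hl, rfl⟩ := exists_append_cons_of_isRotated ht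
  rcases cons_eq_append_iff.1 hl with ⟨rfl, hy⟩ | ⟨p, rfl, hp⟩
  · obtain ⟨rfl, rfl⟩ := cons_eq_cons.1 hy
    exact .bridge (u := []) (filling_nil 0) (filling_nil 0)
  · obtain ⟨rfl, hy⟩ | ⟨_, _, hp⟩ := cons_eq_append_iff.1 hp
    · obtain ⟨rfl, rfl⟩ := cons_eq_cons.1 hy
      simpa using HeadFilling.bridge (y := (x.1, !x.2)) (filling_nil (Rs := Rs) 0) (filling_nil 0)
    · simp at hp

theorem HeadFilling.insert (h : HeadFilling Rs Q (y :: (q ++ p)) a) (hQ : ∀ l e, Q l e → Q' l e)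
    (hinsert : ∀ b d e, Q (b ++ d) e → Q' (b ++ (v ++ d)) (e + c)) :
    HeadFilling Rs Q' (y :: (q ++ (v ++ p))) (a + c) := by
  generalize ht : q ++ p = t at h
  cases h with
  | @face _ s _ a hs ht' =>
    rw [← ht, ← append_assoc] at ht'
    rw [add_right_comm]
    exact .face hs (by simpa using hinsert _ _ _ ht')
  | @bridge _ b d e f hb hd =>
    rcases append_eq_append_cons ht with ⟨r, rfl, rfl⟩ | ⟨r, rfl, rfl⟩
    · rw [add_right_comm]
      simpa using HeadFilling.bridge (y := y) (Rs := Rs) (hinsert _ _ _ hb) (hQ _ _ hd)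
    · rw [add_assoc]
      simpa using HeadFilling.bridge (y := y) (Rs := Rs) (hQ _ _ hb) (hinsert _ _ _ hd)

theorem Filling.append (hu : Filling Rs u a) (hv : Filling Rs v c) :
    Filling Rs (u ++ v) (a + c) := by
  refine Filling.induction (P := fun u a => ∀ v c, Filling Rs v c → ∀ u' v', u ~r u' → v ~r v' →
    Filling Rs (u' ++ v') (a + c)) (fun u a _ hu_step v c hv => ?_)
    hu v c hv u v (.refl u) (.refl v)
  refine Filling.induction (P := fun v c => ∀ u' v', u ~r u' → v ~r v' →
    Filling Rs (u' ++ v') (a + c)) (fun v c hv hv_step u' v' hu' hv' => .intro fun y t ht => ?_) hv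
  obtain ⟨p, q, hl, rfl⟩ := exists_append_cons_of_isRotated ht
  rcases append_eq_append_cons hl with ⟨r, rfl, rfl⟩ | ⟨r, rfl, rfl⟩
  · rw [add_comm]
    refine (hv_step y (q ++ r) (hv'.trans isRotated_append)).insert (fun _ _ h => h.1)
      fun b d e h => ?_
    rw [add_comm, ← append_assoc]
    exact (h.2 u' (d ++ b) hu' isRotated_append).of_isRotated
      (by simpa using isRotated_append (l := u' ++ d) (l' := b))
  · rw [append_assoc]
    refine (hu_step y (r ++ p) (hu'.trans isRotated_append)).insert (fun _ _ h => h.1)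
      fun b d e h => ?_
    exact (h.2 v c hv (d ++ b) v' isRotated_append hv').of_isRotated
      (by simpa using isRotated_append (l := d) (l' := b ++ v'))

theorem HeadFilling.cancel (h : HeadFilling Rs (fun l a => Filling Rs l a ∧
      ∀ z m, l ~r z :: (z.1, !z.2) :: m → Filling Rs m a) (y :: (q ++ x :: (x.1, !x.2) :: p)) A) :
    HeadFilling Rs (Filling Rs) (y :: (q ++ p)) A := by
  generalize ht : q ++ x :: (x.1, !x.2) :: p = t at h
  cases h with
  | @face _ s _ a hs h =>
    refine .face hs ((h.2 x (p ++ (FreeGroup.invRev s ++ q)) ?_).of_isRotated ?_)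
    · rw [← ht, ← append_assoc]
      exact isRotated_append
    · simpa using isRotated_append (l := p) (l' := FreeGroup.invRev s ++ q)
  | @bridge _ u v a c hu hv =>
    rcases append_eq_append_cons ht with ⟨r, rfl, hr⟩ | ⟨r, rfl, rfl⟩
    · obtain ⟨rfl, hxy⟩ | ⟨r, rfl, hr'⟩ := cons_eq_append_iff.1 hr
      -- The bridge crosses back at `x`, so `y = x⁻¹` and the second cancelled letter replaces `y`.
      · obtain ⟨hy, rfl⟩ := cons_eq_cons.1 hxy
        obtain rfl : y = (x.1, !x.2) := by simp [← hy]
        rw [append_nil] at hu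
        rw [add_comm]
        have h_fill := (hv.1.of_isRotated (isRotated_append (l := [_]))).append hu.1
        exact h_fill.head (by simpa using isRotated_append (l := p) (l' := (x.1, !x.2) :: q))
      obtain ⟨rfl, hxy⟩ | ⟨r, rfl, rfl⟩ := cons_eq_append_iff.1 hr'
      -- The bridge crosses back at `x⁻¹`, so `y = x` and the first cancelled letter replaces `y`.
      · obtain ⟨hy, rfl⟩ := cons_eq_cons.1 hxy
        obtain rfl : x = y := by simpa [Prod.ext_iff] using hy.symm
        exact ((hu.1.of_isRotated isRotated_append).append hv.1).head (.refl _)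
      · rw [← append_assoc]
        exact .bridge (hu.2 x (r ++ q) isRotated_append |>.of_isRotated isRotated_append) hv.1
    · rw [append_assoc, cons_append]
      exact .bridge hu.1 ((hv.2 x (p ++ r) isRotated_append).of_isRotated isRotated_append)

theorem Filling.cancel (h : Filling Rs l A) (hl : l ~r x :: (x.1, !x.2) :: t) :
    Filling Rs t A := by
  refine Filling.induction (P := fun l A => ∀ x t, l ~r x :: (x.1, !x.2) :: t → Filling Rs t A)
    (fun l A _ step x t hl => .intro fun y m ht => ?_) h x t hl
  obtain ⟨p, q, rfl, rfl⟩ := exists_append_cons_of_isRotated ht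
  have hl_y : l ~r y :: (q ++ x :: (x.1, !x.2) :: p) := by
    refine hl.trans ?_
    simpa using isRotated_append (l := x :: (x.1, !x.2) :: p) (l' := y :: q)
  exact (step y _ hl_y).cancel

theorem Filling.red (h : Filling Rs l A) (hred : FreeGroup.Red l l') : Filling Rs l' A := by
  induction hred with
  | refl => exact h
  | tail _ hstep ih =>
    obtain ⟨⟩ := hstep
    exact (ih.cancel isRotated_append).of_isRotated isRotated_append

theorem Filling.cons_append_singleton (h : Filling Rs l A) (y : ι × Bool) :
    Filling Rs (y :: (l ++ [(y.1, !y.2)])) A := by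
  have h_rot : l ++ [(y.1, !y.2), y] ~r y :: (l ++ [(y.1, !y.2)]) := by
    simpa using isRotated_append (l := l ++ [(y.1, !y.2)]) (l' := [y])
  simpa using (h.append (filling_pair (y.1, !y.2))).of_isRotated (by simpa using h_rot)

theorem Filling.conj (h : Filling Rs l A) (f : List (ι × Bool)) :
    Filling Rs (f ++ (l ++ FreeGroup.invRev f)) A := by
  induction f with
  | nil => simpa using h
  | cons y f ih => simpa [FreeGroup.invRev] using ih.cons_append_singleton y

theorem filling_of_mem (hRs : ∀ r ∈ Rs, ∀ r', r ~r r' → r' ∈ Rs) (hl : l ∈ Rs) :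
    Filling Rs l 1 :=
  .intro fun y t ht => .face (a := 0) (hRs l hl _ ht) <| by
    simpa using (filling_nil 0).conj (FreeGroup.invRev t)

/-- The words of length at most `M`, reduced or not, that represent the identity under `φ`. -/
def relWords (φ : FreeGroup ι →* G) (M : ℕ) : Set (List (ι × Bool)) :=
  {l | l.length ≤ M ∧ φ (FreeGroup.mk l) = 1}

variable {φ : FreeGroup ι →* G} {M : ℕ}

theorem mem_relWords_of_isRotated (hl : l ∈ relWords φ M) (hll' : l ~r l') :
    l' ∈ relWords φ M := by
  refine ⟨hll'.perm.length_eq ▸ hl.1, ?_⟩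
  obtain ⟨p, q, rfl, rfl⟩ := exists_append_of_isRotated hll'
  rw [← FreeGroup.mul_mk, map_mul]
  exact mul_eq_one_comm.1 (by simpa only [← FreeGroup.mul_mk, map_mul] using hl.2)

theorem AreaLe.filling [DecidableEq ι] {w : FreeGroup ι} (h : AreaLe (triv φ M) w A) :
    Filling (relWords φ M) w.toWord A := by
  refine AreaLe.induction (P := fun w A => Filling (relWords φ M) w.toWord A)
    (by simpa using filling_nil 0) (fun f r w A hr ih => ?_) h
  have hr : r ∈ triv φ M := hr.elim id inv_mem_triv_iff.1
  have hr_fill : Filling (relWords φ M) r.toWord 1 := by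
    refine filling_of_mem (fun _ hl _ => mem_relWords_of_isRotated hl) ⟨?_, ?_⟩
    · rw [← FreeGroup.norm, ← wnorm_eq_norm]
      exact hr.1
    · rw [FreeGroup.mk_toWord]
      exact hr.2
  have h_fill := (hr_fill.conj (f⁻¹).toWord).append ih
  have h_mk : FreeGroup.mk (f⁻¹.toWord ++ (r.toWord ++ FreeGroup.invRev f⁻¹.toWord) ++ w.toWord) =
      f⁻¹ * r * f * w := by
    simp only [← FreeGroup.mul_mk, ← FreeGroup.inv_mk, FreeGroup.mk_toWord]
    group
  rw [add_comm A]
  rw [← h_mk, FreeGroup.toWord_mk]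
  exact h_fill.red FreeGroup.reduce.red

end Filling

section FibreProduct

variable {φ : FreeGroup ι →* G} {w : FreeGroup ι} {M K j k m n : ℕ}

/-- The ball of radius `K` in the fibre product `F ×_G F` of the marking `φ : F → G` with itself. -/
def fiberBall (φ : FreeGroup ι →* G) (K : ℕ) : Set (FreeGroup ι × FreeGroup ι) :=
  {t | φ t.1 = φ t.2 ∧ wnorm t.1 + wnorm t.2 ≤ K}

theorem mul_mem_fiberBall {s t : FreeGroup ι × FreeGroup ι} (hs : s ∈ fiberBall φ j)
    (ht : t ∈ fiberBall φ k) : s * t ∈ fiberBall φ (j + k) := by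
  refine ⟨by simp [hs.1, ht.1], ?_⟩
  have h_fst := wnorm_mul_le s.1 t.1
  have h_snd := wnorm_mul_le s.2 t.2
  have hs_len := hs.2
  have ht_len := ht.2
  simp only [Prod.fst_mul, Prod.snd_mul]
  lia

theorem list_prod_mem_fiberBall {T : List (FreeGroup ι × FreeGroup ι)}
    (hT : ∀ t ∈ T, t ∈ fiberBall φ K) : T.prod ∈ fiberBall φ (K * T.length) := by
  induction T with
  | nil => simp [fiberBall, wnorm_one]
  | cons t T ih =>
    rw [List.forall_mem_cons] at hT
    rw [List.prod_cons, List.length_cons, mul_add_one, add_comm]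
    exact mul_mem_fiberBall hT.1 (ih hT.2)

theorem fst_mul_inv_snd_mem_triv {t : FreeGroup ι × FreeGroup ι} (ht : t ∈ fiberBall φ K) :
    t.1 * t.2⁻¹ ∈ triv φ K :=
  ⟨(wnorm_mul_le _ _).trans (by simpa only [wnorm_inv] using ht.2), by simp [ht.1]⟩

theorem areaLe_list_prod (hm : 0 < m) (T : List (FreeGroup ι × FreeGroup ι))
    (hT : ∀ t ∈ T, t ∈ fiberBall φ K) :
    AreaLe (triv φ (K * m)) (T.prod.1 * T.prod.2⁻¹) (T.length / m + 1) := by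
  induction h : T.length using Nat.strong_induction_on generalizing T with
  | _ n ih =>
    subst h
    have areaLe_one : ∀ T : List (FreeGroup ι × FreeGroup ι), (∀ t ∈ T, t ∈ fiberBall φ K) →
        T.length ≤ m → AreaLe (triv φ (K * m)) (T.prod.1 * T.prod.2⁻¹) 1 := fun T hT hlen =>
      .of_mem <| triv_mono φ (Nat.mul_le_mul_left K hlen) <|
        fst_mul_inv_snd_mem_triv (list_prod_mem_fiberBall hT)
    rcases lt_or_ge T.length m with hlt | hge
    · rw [Nat.div_eq_of_lt hlt]
      exact areaLe_one T hT hlt.le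
    · have h_take := areaLe_one (T.take m) (fun t ht => hT t (List.mem_of_mem_take ht)) (by simp)
      have h_drop := ih (T.drop m).length (by simp; lia) (T.drop m)
        (fun t ht => hT t (List.mem_of_mem_drop ht)) rfl
      convert h_take.mul (h_drop.conj (T.take m).prod.2⁻¹) using 1
      · nth_rw 1 2 [← List.prod_take_mul_prod_drop T m]
        simp only [Prod.fst_mul, Prod.snd_mul]
        group
      · rw [List.length_drop, Nat.div_eq_sub_div hm hge, add_comm]

/-- `FiberLe φ K w n`: `(w, 1)` is a product of at most `n` elements of `fiberBall φ K`. -/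
def FiberLe (φ : FreeGroup ι →* G) (K : ℕ) (w : FreeGroup ι) (n : ℕ) : Prop :=
  ∃ T : List (FreeGroup ι × FreeGroup ι), T.length ≤ n ∧ (∀ t ∈ T, t ∈ fiberBall φ K) ∧
    T.prod = (w, 1)

theorem FiberLe.one : FiberLe φ K 1 n := ⟨[], by simp, by simp, rfl⟩

theorem FiberLe.mono {n' : ℕ} (h : FiberLe φ K w n) (hn : n ≤ n') : FiberLe φ K w n' :=
  h.imp fun _ hT => ⟨hT.1.trans hn, hT.2⟩

theorem FiberLe.triv_mul {r : FreeGroup ι} (hr : r ∈ triv φ K) (h : FiberLe φ K w n) :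
    FiberLe φ K (r * w) (n + 1) := by
  obtain ⟨T, hlen, hT, hprod⟩ := h
  have hr_mem : (r, 1) ∈ fiberBall φ K := ⟨by simpa using hr.2, by simpa [wnorm_one] using hr.1⟩
  exact ⟨(r, 1) :: T, by simpa using hlen, List.forall_mem_cons.2 ⟨hr_mem, hT⟩, by simp [hprod]⟩

theorem FiberLe.conj_mul {f u v : FreeGroup ι} {n' : ℕ} (hf : wnorm f + wnorm f ≤ K)
    (hu : FiberLe φ K u n) (hv : FiberLe φ K v n') :
    FiberLe φ K (f * u * f⁻¹ * v) (n + n' + 2) := by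
  obtain ⟨⟨T, hTlen, hT, hTprod⟩, T', hTlen', hT', hTprod'⟩ := hu, hv
  have hf_mem : (f, f) ∈ fiberBall φ K := ⟨rfl, hf⟩
  have hf_inv_mem : (f⁻¹, f⁻¹) ∈ fiberBall φ K := ⟨rfl, by simpa only [wnorm_inv] using hf⟩
  refine ⟨(f, f) :: (T ++ (f⁻¹, f⁻¹) :: T'), ?_, ?_, by simp [hTprod, hTprod', mul_assoc]⟩
  · simp only [List.length_cons, List.length_append]
    lia
  · simpa only [List.forall_mem_cons, List.forall_mem_append] using ⟨hf_mem, hT, hf_inv_mem, hT'⟩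

theorem FiberLe.area_le (h : FiberLe φ K w n) (hm : 0 < m) :
    area (triv φ (K * m)) w ≤ n / m + 1 := by
  obtain ⟨T, hlen, hT, hprod⟩ := h
  have h_area := (areaLe_list_prod hm T hT).area_le
  rw [hprod, inv_one, mul_one] at h_area
  exact h_area.trans (Nat.succ_le_succ (Nat.div_le_div_right hlen))

theorem freeGroup_mk_cons (y : ι × Bool) (l : List (ι × Bool)) :
    FreeGroup.mk (y :: l) = FreeGroup.mk [y] * FreeGroup.mk l := rfl

theorem Filling.fiberLe {l : List (ι × Bool)} {A : ℕ} (h : Filling (relWords φ M) l A) :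
    FiberLe φ (M + 2) (FreeGroup.mk l) (M * A + l.length) := by
  refine Filling.induction
    (P := fun l A => FiberLe φ (M + 2) (FreeGroup.mk l) (M * A + l.length))
    (fun l A _ step => ?_) h
  rcases l with _ | ⟨y, t⟩
  · exact .one
  cases step y t (.refl _) with
  | @face _ s _ a hs ht =>
    have hs_triv : FreeGroup.mk (y :: s) ∈ triv φ (M + 2) :=
      ⟨(wnorm_mk_le _).trans (hs.1.trans (Nat.le_add_right M 2)), hs.2⟩
    have h_mk : FreeGroup.mk (y :: s) * FreeGroup.mk (FreeGroup.invRev s ++ t) =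
        FreeGroup.mk (y :: t) := by
      rw [freeGroup_mk_cons y s, freeGroup_mk_cons y t, ← FreeGroup.mul_mk, ← FreeGroup.inv_mk]
      group
    have hs_len := hs.1
    refine h_mk ▸ (ht.2.triv_mul hs_triv).mono ?_
    simp only [List.length_cons, List.length_append, FreeGroup.invRev_length] at hs_len ⊢
    lia
  | @bridge _ u v a c hu hv =>
    have h_mk : FreeGroup.mk [y] * FreeGroup.mk u * (FreeGroup.mk [y])⁻¹ * FreeGroup.mk v =
        FreeGroup.mk (y :: (u ++ (y.1, !y.2) :: v)) := by
      simp [FreeGroup.invRev]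
    have hy : wnorm (FreeGroup.mk [y]) + wnorm (FreeGroup.mk [y]) ≤ M + 2 :=
      (add_le_add (wnorm_mk_le _) (wnorm_mk_le _)).trans (Nat.le_add_left 2 M)
    refine h_mk ▸ (hu.2.conj_mul hy hv.2).mono ?_
    simp only [List.length_cons, List.length_append]
    lia

theorem AreaLe.area_triv_le {A : ℕ} (h : AreaLe (triv φ M) w A) (hm : 0 < m) :
    area (triv φ ((M + 2) * m)) w ≤ (M * A + wnorm w) / m + 1 := by
  classical
  have h_fiber := h.filling.fiberLe
  rw [FreeGroup.mk_toWord, ← FreeGroup.norm, ← wnorm_eq_norm] at h_fiber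
  exact h_fiber.area_le hm

theorem isoSpec_le_dehn_div [Finite ι] {R : Set (FreeGroup ι)}
    (hker : φ.ker = Subgroup.normalClosure R) (hR : R ⊆ triv φ M) (hm : 0 < m) (k n : ℕ) :
    isoSpec φ k ((M + 2) * m) n ≤ (M * dehn R n + n) / m + 1 := by
  refine maxArea_le fun w hw hwn => ?_
  have hwR : w ∈ Subgroup.normalClosure R := hker ▸ normalClosure_triv_le_ker φ k hw
  refine (((areaLe_area hwR).mono hR).area_triv_le hm).trans ?_
  have h_area : area R w ≤ dehn R n := area_le_maxArea hwR hwn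
  gcongr

end FibreProduct

section Spectrum

theorem specLE_of_le {f g : ℕ → ℕ → ℕ → ℝ} {C : ℕ} (hC : 0 < C)
    (h : ∀ k m n, 0 < k → 0 < m → 0 < n → C * k ≤ m →
      f k (C * m) n ≤ C * g (C * k) m (C * n)) : SpecLE f g :=
  ⟨C, hC, fun k m n hk hm hn hkm => (h k m n hk hm hn hkm).trans <| by
    rw [add_assoc]
    exact le_add_of_nonneg_right (by positivity)⟩

variable {φ : FreeGroup ι →* G} {R : Set (FreeGroup ι)} {M : ℕ}

theorem isoSpec_mono [Finite ι] (φ : FreeGroup ι →* G) {k k' m m' n n' : ℕ} (hk : k ≤ k')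
    (hm : m ≤ m') (hn : n ≤ n') (hkm : k ≤ m) : isoSpec φ k m' n ≤ isoSpec φ k' m n' :=
  maxArea_mono (Subgroup.normalClosure_mono (triv_mono φ hk)) (triv_mono φ hm)
    (Subgroup.normalClosure_mono (triv_mono φ hkm)) hn

theorem isoSpec_eq_of_le (hker : φ.ker = Subgroup.normalClosure R) (hR : R ⊆ triv φ M) {k : ℕ}
    (hk : M ≤ k) (m n : ℕ) : isoSpec φ k m n = isoSpec φ M m n := by
  rw [isoSpec, isoSpec, normalClosure_triv_eq_ker hker hR,
    normalClosure_triv_eq_ker hker (hR.trans (triv_mono φ hk))]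

theorem specLE_dehn_div_dehn_isoSpecR [Finite ι] (hker : φ.ker = Subgroup.normalClosure R)
    (hR : R ⊆ triv φ M) (hpos : ∀ m : ℕ, 0 < m → 0 < dehn R m) :
    SpecLE (fun _ m n => (dehn R n : ℝ) / (dehn R m : ℝ)) (isoSpecR φ) := by
  refine specLE_of_le (C := M + 1) M.succ_pos fun k m n hk hm _ hkm => ?_
  have hMk : M ≤ (M + 1) * k := by nlinarith
  have h_dehn : dehn R n ≤ (M + 1) * isoSpec φ ((M + 1) * k) m ((M + 1) * n) *
      dehn R ((M + 1) * m) := calc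
    dehn R n ≤ dehn R ((M + 1) * n) := dehn_mono (Nat.le_mul_of_pos_left n M.succ_pos)
    _ ≤ isoSpec φ ((M + 1) * k) m ((M + 1) * n) * dehn R m :=
      dehn_le_isoSpec_mul_dehn hker (hR.trans (triv_mono φ hMk)) hkm _
    _ ≤ (M + 1) * isoSpec φ ((M + 1) * k) m ((M + 1) * n) * dehn R ((M + 1) * m) :=
      Nat.mul_le_mul (Nat.le_mul_of_pos_left _ M.succ_pos)
        (dehn_mono (Nat.le_mul_of_pos_left m M.succ_pos))
  rw [div_le_iff₀ (by exact_mod_cast hpos _ (Nat.mul_pos M.succ_pos hm))]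
  simp only [isoSpecR]
  exact_mod_cast h_dehn

theorem specLE_isoSpecR_dehn_div [Finite ι] (hker : φ.ker = Subgroup.normalClosure R)
    (hR : R ⊆ triv φ M) :
    SpecLE (isoSpecR φ) (fun _ m n => (dehn R n : ℝ) / (m : ℝ)) := by
  refine ⟨M + 2, by lia, fun k m n _ hm _ _ => ?_⟩
  have h_dehn : dehn R n ≤ dehn R ((M + 2) * n) :=
    dehn_mono (Nat.le_mul_of_pos_left n (Nat.succ_pos _))
  calc (isoSpec φ k ((M + 2) * m) n : ℝ)
      ≤ ((M * dehn R n + n) / m + 1 : ℕ) := mod_cast isoSpec_le_dehn_div hker hR hm k n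
    _ ≤ ((M * dehn R n + n : ℕ) / m + 1 : ℝ) := by
      rw [Nat.cast_add_one]
      gcongr
      exact Nat.cast_div_le
    _ = M * (dehn R n / m) + 1 * n / m + 1 := by
      push_cast
      ring
    _ ≤ (M + 2 : ℕ) * (dehn R ((M + 2) * n) / m) + (M + 2 : ℕ) * n / m + (M + 2 : ℕ) := by
      gcongr <;> norm_cast <;> lia

theorem specEquiv_isoSpecR [Finite ι] (hker : φ.ker = Subgroup.normalClosure R)
    (hR : R ⊆ triv φ M) :
    SpecEquiv (isoSpecR φ) (fun _ m n => (isoSpec φ M m n : ℝ)) := by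
  have h_eq {k : ℕ} (hk : 0 < k) (m n : ℕ) : isoSpec φ ((M + 1) * k) m n = isoSpec φ M m n :=
    isoSpec_eq_of_le hker hR (by nlinarith) m n
  have h_le {a b : ℕ} (hab : a ≤ b) : (a : ℝ) ≤ (M + 1 : ℕ) * b :=
    mod_cast hab.trans (Nat.le_mul_of_pos_left b M.succ_pos)
  have le_mul (j : ℕ) : j ≤ (M + 1) * j := Nat.le_mul_of_pos_left j M.succ_pos
  constructor <;> refine specLE_of_le (C := M + 1) M.succ_pos fun k m n hk _ _ hkm => h_le ?_
  · rw [← h_eq hk]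
    exact isoSpec_mono φ (le_mul k) (le_mul m) (le_mul n) ((le_mul k).trans hkm)
  · rw [← h_eq hk]
    exact isoSpec_mono φ le_rfl (le_mul m) (le_mul n) hkm

end Spectrum

theorem isoSpec_of_finitelyPresented_general [Finite ι]
    (φ : FreeGroup ι →* G) (R : Set (FreeGroup ι)) (hR : R.Finite)
    (hker : φ.ker = Subgroup.normalClosure R)
    (hpos : ∀ m : ℕ, 0 < m → 0 < dehn R m) :
    SpecLE (fun _ m n => (dehn R n : ℝ) / (dehn R m : ℝ)) (isoSpecR φ) ∧
    SpecLE (isoSpecR φ) (fun _ m n => (dehn R n : ℝ) / (m : ℝ)) ∧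
    ∃ g : ℕ → ℕ → ℝ, SpecEquiv (isoSpecR φ) (fun _ m n => g m n) := by
  obtain ⟨M, hM⟩ := exists_subset_triv hR (hker ▸ Subgroup.subset_normalClosure)
  exact ⟨specLE_dehn_div_dehn_isoSpecR hker hM hpos, specLE_isoSpecR_dehn_div hker hM,
    fun m n => isoSpec φ M m n, specEquiv_isoSpecR hker hM⟩

/-- For a finitely presented group `G = ⟨X | R⟩` whose Dehn function is
positive, the isoperimetric spectrum satisfies
`δ_G(n)/δ_G(m) ≼ f_{G,X}(k,m,n) ≼ δ_G(n)/m`; in particular it is equivalent to a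
function depending on `m` and `n` only. -/
theorem isoSpec_of_finitelyPresented {G : Type} [Group G] {a : ℕ}
    (φ : FreeGroup (Fin a) →* G) (hφ : Surjective φ)
    (R : Set (FreeGroup (Fin a))) (hR : R.Finite)
    (hker : φ.ker = Subgroup.normalClosure R)
    (hpos : ∀ m : ℕ, 0 < m → 0 < dehn R m) :
    SpecLE (fun _ m n => (dehn R n : ℝ) / (dehn R m : ℝ)) (isoSpecR φ) ∧
    SpecLE (isoSpecR φ) (fun _ m n => (dehn R n : ℝ) / (m : ℝ)) ∧
    ∃ g : ℕ → ℕ → ℝ, SpecEquiv (isoSpecR φ) (fun _ m n => g m n) :=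
  isoSpec_of_finitelyPresented_general φ R hR hker hpos

end IsoSpecPaper
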